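/- At every point λ of the Boyer–Lindquist phase-space chart U with r = r_s/2, p_t + (c/r_s)·p_φ = 0, and (p_θ, p_φ) ≠ (0,0), the 8×8 Hessian matrix of all second partial derivatives of P₀ (with respect to the eight variables t, r, θ, φ, p_t, p_r, p_θ, p_φ) has rank exactly 2. -/

import Mathlib

noncomputable section

/-- Partial derivative of a function on phase space ℝ⁸ with respect to the i-th variable.
Coordinates: x 0 = t, x 1 = r, x 2 = θ, x 3 = φ, x 4 = p_t, x 5 = p_r, x 6 = p_θ, x 7 = p_φ. -/
def pd (i : Fin 8) (f : (Fin 8 → ℝ) → ℝ) (x : Fin 8 → ℝ) : ℝ :=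
  deriv (fun s => f (Function.update x i s)) (x i)

/-- The 8×8 Hessian matrix of all second partial derivatives of f at x. -/
def hess (f : (Fin 8 → ℝ) → ℝ) (x : Fin 8 → ℝ) : Matrix (Fin 8) (Fin 8) ℝ :=
  Matrix.of fun i j => pd i (pd j f) x

/-- Σ = r² + (r_s²/4)·cos²θ -/
def Sig (rs r th : ℝ) : ℝ := r ^ 2 + rs ^ 2 / 4 * Real.cos th ^ 2

/-- Δ = (r − r_s/2)² -/
def Del (rs r : ℝ) : ℝ := (r - rs / 2) ^ 2

/-- D = r² + r_s²/4 + (r_s·r/Σ)·(r_s²/4)·sin²θ -/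
def Dfun (rs r th : ℝ) : ℝ :=
  r ^ 2 + rs ^ 2 / 4 + rs * r / Sig rs r th * (rs ^ 2 / 4) * Real.sin th ^ 2

/-- The Δ-rescaled principal symbol P₀ of P = Δ·□_g for extremal Kerr, as a function
on phase space ℝ⁸. -/
def P0v (rs c : ℝ) (x : Fin 8 → ℝ) : ℝ :=
  Sig rs (x 1) (x 2) * Real.sin (x 2) *
    (Dfun rs (x 1) (x 2) / c ^ 2 * (x 4) ^ 2
      + rs ^ 2 * x 1 / (c * Sig rs (x 1) (x 2)) * (x 4 * x 7)
      - Del rs (x 1) ^ 2 / Sig rs (x 1) (x 2) * (x 5) ^ 2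
      - Del rs (x 1) / Sig rs (x 1) (x 2) * (x 6) ^ 2
      - 1 / Real.sin (x 2) ^ 2 * (1 - rs * x 1 / Sig rs (x 1) (x 2)) * (x 7) ^ 2)

lemma pd_eq_fderiv {f : (Fin 8 → ℝ) → ℝ} {x : Fin 8 → ℝ} (i : Fin 8)
    (hf : DifferentiableAt ℝ f x) : pd i f x = fderiv ℝ f x (Pi.single i 1) := by
  unfold pd
  have h1 : HasDerivAt (fun s => Function.update x i s) (Pi.single i (1 : ℝ)) (x i) :=
    hasDerivAt_update x i (x i)
  have h2 : HasFDerivAt f (fderiv ℝ f x) (Function.update x i (x i)) := by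
    rw [Function.update_eq_self]; exact hf.hasFDerivAt
  exact (h2.comp_hasDerivAt (x i) h1).deriv

lemma pd_congr {f g : (Fin 8 → ℝ) → ℝ} {x : Fin 8 → ℝ} (i : Fin 8)
    (h : f =ᶠ[nhds x] g) : pd i f x = pd i g x := by
  unfold pd
  apply Filter.EventuallyEq.deriv_eq
  have hc : Filter.Tendsto (fun s => Function.update x i s) (nhds (x i)) (nhds x) := by
    have := (hasDerivAt_update x i (x i)).continuousAt.tendsto
    rwa [Function.update_eq_self] at this
  exact hc.eventually h

lemma pd_congr_ev {f g : (Fin 8 → ℝ) → ℝ} {x : Fin 8 → ℝ} (i : Fin 8)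
    (h : f =ᶠ[nhds x] g) : pd i f =ᶠ[nhds x] pd i g := by
  filter_upwards [h.eventuallyEq_nhds] with y hy
  exact pd_congr i hy

lemma pd_mul {f g : (Fin 8 → ℝ) → ℝ} {x : Fin 8 → ℝ} (i : Fin 8)
    (hf : DifferentiableAt ℝ f x) (hg : DifferentiableAt ℝ g x) :
    pd i (fun y => f y * g y) x = f x * pd i g x + g x * pd i f x := by
  rw [pd_eq_fderiv i (hf.fun_mul hg), pd_eq_fderiv i hf, pd_eq_fderiv i hg, fderiv_fun_mul hf hg]
  simp

lemma pd_add {f g : (Fin 8 → ℝ) → ℝ} {x : Fin 8 → ℝ} (i : Fin 8)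
    (hf : DifferentiableAt ℝ f x) (hg : DifferentiableAt ℝ g x) :
    pd i (fun y => f y + g y) x = pd i f x + pd i g x := by
  rw [pd_eq_fderiv i (hf.fun_add hg), pd_eq_fderiv i hf, pd_eq_fderiv i hg, fderiv_fun_add hf hg]
  simp

lemma ev_diff {f : (Fin 8 → ℝ) → ℝ} {x : Fin 8 → ℝ} (hf : ContDiffAt ℝ 2 f x) :
    ∀ᶠ y in nhds x, DifferentiableAt ℝ f y := by
  filter_upwards [hf.eventually (by simp)] with y hy
  exact hy.differentiableAt (by simp)

lemma pd_diff {f : (Fin 8 → ℝ) → ℝ} {x : Fin 8 → ℝ} (i : Fin 8) (hf : ContDiffAt ℝ 2 f x) :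
    DifferentiableAt ℝ (pd i f) x := by
  have h : pd i f =ᶠ[nhds x] fun y => fderiv ℝ f y (Pi.single i 1) := by
    filter_upwards [ev_diff hf] with y hy
    exact pd_eq_fderiv i hy
  have h2 : DifferentiableAt ℝ (fderiv ℝ f) x :=
    (hf.fderiv_right (m := 1) (by norm_num)).differentiableAt (by simp)
  exact (h2.clm_apply (differentiableAt_const _)).congr_of_eventuallyEq h

/-- Second derivatives of `u * A ^ 2` at a zero of `A`. -/
lemma pd_pd_sq {u A : (Fin 8 → ℝ) → ℝ} {x : Fin 8 → ℝ} (i j : Fin 8)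
    (hu : ContDiffAt ℝ 2 u x) (hA : ContDiffAt ℝ 2 A x) (h0 : A x = 0) :
    pd i (pd j (fun y => u y * (A y * A y))) x = 2 * u x * pd i A x * pd j A x := by
  have h : pd j (fun y => u y * (A y * A y)) =ᶠ[nhds x]
      fun y => A y * (A y * pd j u y + (u y * pd j A y + u y * pd j A y)) := by
    filter_upwards [ev_diff hu, ev_diff hA] with y hy1 hy2
    rw [pd_mul j hy1 (hy2.fun_mul hy2), pd_mul j hy2 hy2]
    ring
  have du := hu.differentiableAt (by simp)
  have dA := hA.differentiableAt (by simp)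
  have dpu := pd_diff j hu
  have dpA := pd_diff j hA
  rw [pd_congr i h, pd_mul i dA ((dA.fun_mul dpu).fun_add ((du.fun_mul dpA).fun_add (du.fun_mul dpA))), h0]
  ring

lemma pd_pd_add {f g : (Fin 8 → ℝ) → ℝ} {x : Fin 8 → ℝ} (i j : Fin 8)
    (hf : ContDiffAt ℝ 2 f x) (hg : ContDiffAt ℝ 2 g x) :
    pd i (pd j (fun y => f y + g y)) x = pd i (pd j f) x + pd i (pd j g) x := by
  have h : pd j (fun y => f y + g y) =ᶠ[nhds x] fun y => pd j f y + pd j g y := by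
    filter_upwards [ev_diff hf, ev_diff hg] with y hy1 hy2
    exact pd_add j hy1 hy2
  rw [pd_congr i h, pd_add i (pd_diff j hf) (pd_diff j hg)]

def Afun (rs c : ℝ) (y : Fin 8 → ℝ) : ℝ :=
  ((y 1) ^ 2 + rs ^ 2 / 4) * y 4 / c + rs / 2 * y 7

def dfun (rs : ℝ) (y : Fin 8 → ℝ) : ℝ := y 1 - rs / 2

def vfun (rs c : ℝ) (y : Fin 8 → ℝ) : ℝ :=
  -(Real.sin (y 2) * ((rs / 2 * Real.sin (y 2) * y 4 / c + y 7 / Real.sin (y 2)) ^ 2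
    + (y 6) ^ 2 + (y 1 - rs / 2) ^ 2 * (y 5) ^ 2))

/-- Sum-of-squares form of the symbol. -/
lemma P0v_eq (rs c : ℝ) (hc : 0 < c) (y : Fin 8 → ℝ) (hr : 0 < y 1)
    (hth : Real.sin (y 2) ≠ 0) :
    P0v rs c y = Real.sin (y 2) * (Afun rs c y * Afun rs c y)
      + vfun rs c y * (dfun rs y * dfun rs y) := by
  have hS : Sig rs (y 1) (y 2) ≠ 0 := by unfold Sig; positivity
  have hcos : Sig rs (y 1) (y 2)
      = (y 1) ^ 2 + rs ^ 2 / 4 * (1 - Real.sin (y 2) ^ 2) := by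
    unfold Sig; rw [Real.cos_sq']
  unfold P0v Dfun Del Afun vfun dfun
  generalize Sig rs (y 1) (y 2) = S at *
  generalize Real.sin (y 2) = s at *
  field_simp
  subst hcos
  ring

/-- at every point of Σ₂ \ N*ℋ (i.e. r = r_s/2, p_t + (c/r_s)p_φ = 0 and
(p_θ,p_φ) ≠ (0,0)), the 8×8 Hessian of P₀ has rank exactly 2. -/
theorem hessian_rank_two_on_Sigma2
    (rs c : ℝ) (hrs : 0 < rs) (hc : 0 < c)
    (x : Fin 8 → ℝ) (hr : 0 < x 1) (hth : Real.sin (x 2) ≠ 0)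
    (hhor : x 1 = rs / 2) (hchar : x 4 + c / rs * x 7 = 0)
    (hp : ¬(x 6 = 0 ∧ x 7 = 0)) :
    (hess (P0v rs c) x).rank = 2 := by
  have hcne := hc.ne'
  have hrsne := hrs.ne'
  have hev : P0v rs c =ᶠ[nhds x] fun y => Real.sin (y 2) * (Afun rs c y * Afun rs c y)
      + vfun rs c y * (dfun rs y * dfun rs y) := by
    have e1 : ∀ᶠ y : Fin 8 → ℝ in nhds x, 0 < y 1 :=
      (continuous_apply 1).continuousAt.eventually (lt_mem_nhds hr)
    have e2 : ∀ᶠ y : Fin 8 → ℝ in nhds x, Real.sin (y 2) ≠ 0 :=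
      (Real.continuous_sin.comp (continuous_apply 2)).continuousAt.eventually_ne hth
    filter_upwards [e1, e2] with y h1 h2
    exact P0v_eq rs c hc y h1 h2
  have cs : ContDiffAt ℝ 2 (fun y : Fin 8 → ℝ => Real.sin (y 2)) x := by fun_prop
  have cA : ContDiffAt ℝ 2 (Afun rs c) x := by unfold Afun; fun_prop
  have cd : ContDiffAt ℝ 2 (dfun rs) x := by unfold dfun; fun_prop
  have cv : ContDiffAt ℝ 2 (vfun rs c) x := by
    unfold vfun
    fun_prop (disch := assumption)
  have hx4 : x 4 = -(c / rs * x 7) := by linarith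
  have A0 : Afun rs c x = 0 := by
    unfold Afun; rw [hhor, hx4]; field_simp; ring
  have d0 : dfun rs x = 0 := by unfold dfun; rw [hhor]; ring
  have hH : ∀ i j, hess (P0v rs c) x i j
      = 2 * Real.sin (x 2) * pd i (Afun rs c) x * pd j (Afun rs c) x
        + 2 * vfun rs c x * pd i (dfun rs) x * pd j (dfun rs) x := by
    intro i j
    change pd i (pd j (P0v rs c)) x = _
    rw [pd_congr i (pd_congr_ev j hev),
      pd_pd_add i j (cs.mul (cA.mul cA)) (cv.mul (cd.mul cd)),
      pd_pd_sq i j cs cA A0, pd_pd_sq i j cv cd d0]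
  have hA4 : pd 4 (Afun rs c) x = rs ^ 2 / 2 / c := by
    have : (fun s => Afun rs c (Function.update x 4 s))
        = fun s => ((x 1) ^ 2 + rs ^ 2 / 4) / c * s + rs / 2 * x 7 := by
      funext s
      simp [Afun, Function.update_apply]
      ring
    unfold pd
    rw [this, ((((hasDerivAt_id' (x 4)).const_mul
      (((x 1) ^ 2 + rs ^ 2 / 4) / c)).add_const (rs / 2 * x 7))).deriv, hhor]
    ring
  have hd1 : pd 1 (dfun rs) x = 1 := by
    simp [pd, dfun]
  have hd4 : pd 4 (dfun rs) x = 0 := by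
    simp [pd, dfun, Function.update_apply]
  have hv : vfun rs c x ≠ 0 := by
    unfold vfun
    rw [hhor, hx4]
    have hs1 := Real.sin_sq_le_one (x 2)
    generalize Real.sin (x 2) = s at *
    refine neg_ne_zero.mpr (mul_ne_zero hth ?_)
    have e : rs / 2 * s * -(c / rs * x 7) / c + x 7 / s = x 7 * ((2 - s ^ 2) / (2 * s)) := by
      field_simp; ring
    have e2 : (2 - s ^ 2) / (2 * s) ≠ 0 :=
      div_ne_zero (by nlinarith) (mul_ne_zero two_ne_zero hth)
    rw [e]
    intro h
    have h7 : (x 7 * ((2 - s ^ 2) / (2 * s))) ^ 2 = 0 := by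
      nlinarith [sq_nonneg (x 7 * ((2 - s ^ 2) / (2 * s))), sq_nonneg (x 6)]
    have h6 : x 6 ^ 2 = 0 := by
      nlinarith [sq_nonneg (x 7 * ((2 - s ^ 2) / (2 * s))), sq_nonneg (x 6)]
    refine hp ⟨by simpa using h6, ?_⟩
    have := pow_eq_zero_iff (two_ne_zero) |>.mp h7
    exact (mul_eq_zero.mp this).resolve_right e2
  apply le_antisymm
  · have : hess (P0v rs c) x
        = (Matrix.of fun (i : Fin 8) (k : Fin 2) =>
            (![2 * Real.sin (x 2) * pd i (Afun rs c) x, 2 * vfun rs c x * pd i (dfun rs) x]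
              : Fin 2 → ℝ) k)
          * (Matrix.of fun (k : Fin 2) (j : Fin 8) =>
            (![pd j (Afun rs c) x, pd j (dfun rs) x] : Fin 2 → ℝ) k) := by
      ext i j
      rw [hH, Matrix.mul_apply, Fin.sum_univ_two]
      simp
    rw [this]
    exact (Matrix.rank_mul_le_left _ _).trans (Matrix.rank_le_width _)
  · have h := Matrix.rank_submatrix_le (hess (P0v rs c) x) ![1, 4] ![1, 4]
    have hu : IsUnit ((hess (P0v rs c) x).submatrix ![1, 4] ![1, 4]) := by
      rw [Matrix.isUnit_iff_isUnit_det, Matrix.det_fin_two, isUnit_iff_ne_zero]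
      simp only [Matrix.submatrix_apply, Matrix.cons_val_zero, Matrix.cons_val_one, hH,
        hd1, hd4, hA4]
      have : 4 * Real.sin (x 2) * vfun rs c x * (rs ^ 2 / 2 / c) ^ 2 ≠ 0 := by positivity
      convert this using 1
      ring
    rw [Matrix.rank_of_isUnit _ hu] at h
    simpa using h
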